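/- The R-matrix R satisfies the Hecke quadratic relation (R − q^{−1}·Id_{V⊗V}) ∘ (R + q·Id_{V⊗V}) = 0, i.e. R² = (q^{−1} − q)·R + Id_{V⊗V}. -/

import Mathlib

set_option synthInstance.maxHeartbeats 400000
set_option maxHeartbeats 800000

noncomputable section

/-- The base field `K = ℚ(q)`. -/
abbrev K : Type := RatFunc ℚ

/-- The variable `q`. -/
def q : K := RatFunc.X

/-- The super sign `(-1)^{|i||j|}`, where the parity `|i|` of an index
`i : Fin (m+n)` (0-based) is `0` if `i < m` and `1` otherwise. -/
def sgn (m : ℕ) {M : ℕ} (i j : Fin M) : K :=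
  if m ≤ (i : ℕ) ∧ m ≤ (j : ℕ) then -1 else 1

/-- The matrix (in the standard basis of `V ⊗ V`, `V = K^{m+n}`, indices 0-based)
of the `U_q(gl(m|n))` R-matrix: `R(eᵢ ⊗ eᵢ) = q⁻¹ eᵢ ⊗ eᵢ` for `i` of parity 0,
`R(eᵢ ⊗ eᵢ) = -q eᵢ ⊗ eᵢ` for `i` of parity 1,
`R(eᵢ ⊗ eⱼ) = (-1)^{|i||j|} eⱼ ⊗ eᵢ` for `i < j`, and
`R(eᵢ ⊗ eⱼ) = (-1)^{|i||j|} eⱼ ⊗ eᵢ + (q⁻¹ - q) eᵢ ⊗ eⱼ` for `i > j`.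
Entry `(p, r)` is the coefficient of `e_{p.1} ⊗ e_{p.2}` in `R(e_{r.1} ⊗ e_{r.2})`. -/
def Rmat (m n : ℕ) :
    Matrix (Fin (m + n) × Fin (m + n)) (Fin (m + n) × Fin (m + n)) K :=
  fun p r =>
    if r.1 = r.2 then
      (if p = r then (if (r.1 : ℕ) < m then q⁻¹ else -q) else 0)
    else
      (if p.1 = r.2 ∧ p.2 = r.1 then sgn m r.1 r.2 else 0)
        + (if r.2 < r.1 ∧ p = r then q⁻¹ - q else 0)

/-- The identity matrix on `V ⊗ V`. -/
def idVV (m n : ℕ) :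
    Matrix (Fin (m + n) × Fin (m + n)) (Fin (m + n) × Fin (m + n)) K := 1

lemma q_ne : q ≠ 0 := RatFunc.X_ne_zero

def ca (m n : ℕ) (r : Fin (m + n) × Fin (m + n)) : K :=
  if r.1 = r.2 then (if (r.1 : ℕ) < m then q⁻¹ else -q)
  else if r.2 < r.1 then q⁻¹ - q else 0

def cb (m n : ℕ) (r : Fin (m + n) × Fin (m + n)) : K :=
  if r.1 = r.2 then 0 else sgn m r.1 r.2

lemma Rmat_eq (m n : ℕ) (p r : Fin (m + n) × Fin (m + n)) :
    Rmat m n p r = (if p = r then ca m n r else 0) + (if p = r.swap then cb m n r else 0) := by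
  obtain ⟨a, b⟩ := p
  obtain ⟨c, d⟩ := r
  simp only [Rmat, ca, cb, Prod.swap, Prod.mk.injEq]
  by_cases h : c = d
  · simp [h]
  · by_cases h2 : d < c <;> simp [h, h2, add_comm]

lemma sgn_sq (m : ℕ) {M : ℕ} (i j : Fin M) : sgn m i j * sgn m j i = 1 := by
  unfold sgn
  by_cases h : m ≤ (i : ℕ) <;> by_cases h' : m ≤ (j : ℕ) <;> simp [h, h']

lemma coef1 (m n : ℕ) (r : Fin (m + n) × Fin (m + n)) :
    ca m n r * ca m n r + cb m n r * cb m n r.swap = (q⁻¹ - q) * ca m n r + 1 := by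
  obtain ⟨c, d⟩ := r
  have hq : q⁻¹ * q = 1 := inv_mul_cancel₀ q_ne
  simp only [ca, cb, Prod.swap]
  by_cases h : c = d
  · subst h
    by_cases h2 : (c : ℕ) < m
    · simp only [h2, if_true]; linear_combination hq
    · simp only [h2, if_true, if_false]; linear_combination hq
  · have h' : ¬ d = c := fun e => h e.symm
    simp only [h, h', if_false, sgn_sq]
    split_ifs <;> ring

lemma coef2 (m n : ℕ) (r : Fin (m + n) × Fin (m + n)) :
    ca m n r * cb m n r + cb m n r * ca m n r.swap = (q⁻¹ - q) * cb m n r := by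
  obtain ⟨c, d⟩ := r
  simp only [ca, cb, Prod.swap]
  rcases lt_trichotomy c d with h | h | h
  · simp only [h, h.ne, h.ne', h.not_gt, if_true, if_false]; ring
  · simp [h]
  · simp only [h, h.ne, h.ne', h.not_gt, if_true, if_false]; ring

lemma Rmat_sq (m n : ℕ) :
    Rmat m n * Rmat m n = (q⁻¹ - q) • Rmat m n + idVV m n := by
  ext p r
  have h1 : (Rmat m n * Rmat m n) p r
      = Rmat m n p r * ca m n r + Rmat m n p r.swap * cb m n r := by
    rw [Matrix.mul_apply]
    simp only [Rmat_eq m n _ r, mul_add, Finset.sum_add_distrib, mul_ite, mul_zero,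
      Finset.sum_ite_eq', Finset.mem_univ, if_true]
  have h2 : ((q⁻¹ - q) • Rmat m n + idVV m n) p r
      = (q⁻¹ - q) * Rmat m n p r + if p = r then 1 else 0 := by
    simp [idVV, Matrix.one_apply]
  rw [h1, h2, Rmat_eq, Rmat_eq, Prod.swap_swap]
  have e1 := coef1 m n r
  have e2 := coef2 m n r
  generalize (ca m n r) = A at *
  generalize (ca m n r.swap) = A' at *
  generalize (cb m n r) = B at *
  generalize (cb m n r.swap) = B' at *
  split_ifs
  · linear_combination e1 + e2
  · linear_combination e1
  · linear_combination e2
  · ring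

/-- The R-matrix satisfies the Hecke quadratic relation
`(R - q⁻¹·Id) ∘ (R + q·Id) = 0`, i.e. `R² = (q⁻¹ - q)·R + Id`. -/
theorem hecke_quadratic_relation (m n : ℕ) :
    (Rmat m n - q⁻¹ • idVV m n) * (Rmat m n + q • idVV m n) = 0 ∧
    Rmat m n * Rmat m n = (q⁻¹ - q) • Rmat m n + idVV m n := by
  refine ⟨?_, Rmat_sq m n⟩
  have hq : q * q⁻¹ = 1 := mul_inv_cancel₀ q_ne
  have h := Rmat_sq m n
  unfold idVV at *
  rw [sub_mul, mul_add, mul_add, h]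
  simp only [Matrix.mul_smul, Matrix.smul_mul, mul_one, one_mul, smul_smul, sub_smul, hq, one_smul]
  abel
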